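/- Deduction theorem for SKSg: for all formulas P and Q, there exists a derivation in SKSg with premise P and conclusion Q if and only if there exists a proof in SKSg of the formula [¬P, Q]. -/

import Mathlib

/-!
Deep-inference systems SKSg, SKS and KS for classical propositional logic
(the calculus of structures).  Formulas are built from atoms `a`, their
negations `ā`, and the units `t` (true) and `f` (false) by disjunction
`[P,Q]` (`dis`) and conjunction `(P,Q)` (`con`), and are considered modulo
the congruence `Equiv` generated by associativity, commutativity and the
unit laws.  Rules apply inside an arbitrary one-hole context and modulo the
equivalence.
-/

namespace DI

/-- Formulas of the calculus of structures for classical logic: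
units `t`, `f`; atoms `pos a`; negated atoms `neg a`; disjunction `dis`
(written `[P,Q]`); conjunction `con` (written `(P,Q)`). -/
inductive F : Type where
  | tt  : F
  | ff  : F
  | pos : ℕ → F
  | neg : ℕ → F
  | dis : F → F → F
  | con : F → F → F
deriving DecidableEq

/-- Negation, pushed to the atoms by the De Morgan laws:
`¬t = f`, `¬f = t`, `¬[P,Q] = (¬P,¬Q)`, `¬(P,Q) = [¬P,¬Q]`, `¬¬P = P`. -/
def F.negF : F → F
  | .tt => .ff
  | .ff => .tt
  | .pos a => .neg a
  | .neg a => .pos a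
  | .dis P Q => .con P.negF Q.negF
  | .con P Q => .dis P.negF Q.negF

/-- Atoms are the propositional symbols and their negations. -/
def F.isAtom : F → Prop
  | .pos _ => True
  | .neg _ => True
  | _ => False

/-- Syntactic equivalence of formulas: the smallest congruence generated by
associativity and commutativity of both connectives and the unit laws
`[t,t]=t`, `(f,f)=f`, `[f,P]=P`, `(t,P)=P`. -/
inductive Equiv : F → F → Prop where
  | refl (P : F) : Equiv P P
  | symm {P Q : F} : Equiv P Q → Equiv Q P
  | trans {P Q R : F} : Equiv P Q → Equiv Q R → Equiv P R
  | disComm (P Q : F) : Equiv (.dis P Q) (.dis Q P)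
  | conComm (P Q : F) : Equiv (.con P Q) (.con Q P)
  | disAssoc (P Q R : F) : Equiv (.dis (.dis P Q) R) (.dis P (.dis Q R))
  | conAssoc (P Q R : F) : Equiv (.con (.con P Q) R) (.con P (.con Q R))
  | ttDis : Equiv (.dis .tt .tt) .tt
  | ffCon : Equiv (.con .ff .ff) .ff
  | ffDis (P : F) : Equiv (.dis .ff P) P
  | ttCon (P : F) : Equiv (.con .tt P) P
  | disCongr {P P' Q Q' : F} :
      Equiv P P' → Equiv Q Q' → Equiv (.dis P Q) (.dis P' Q')
  | conCongr {P P' Q Q' : F} :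
      Equiv P P' → Equiv Q Q' → Equiv (.con P Q) (.con P' Q')

/-- One-hole contexts. -/
inductive Ctx : Type where
  | hole : Ctx
  | disL : Ctx → F → Ctx
  | disR : F → Ctx → Ctx
  | conL : Ctx → F → Ctx
  | conR : F → Ctx → Ctx

/-- Plugging a formula into the hole of a context. -/
def Ctx.fill : Ctx → F → F
  | .hole, P => P
  | .disL C Q, P => .dis (C.fill P) Q
  | .disR Q C, P => .dis Q (C.fill P)
  | .conL C Q, P => .con (C.fill P) Q
  | .conR Q C, P => .con Q (C.fill P)

/-- Names of the inference rules of SKSg and SKS. -/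
inductive Rule : Type where
  | iDown | iUp | wDown | wUp | cDown | cUp | s | m
  | aiDown | aiUp | awDown | awUp | acDown | acUp
deriving DecidableEq

/-- The rules, read at the root of a formula (premise on the left,
conclusion on the right). -/
inductive RootStep : Rule → F → F → Prop where
  | iDown (P : F) : RootStep .iDown .tt (.dis P P.negF)
  | iUp (P : F) : RootStep .iUp (.con P P.negF) .ff
  | wDown (P : F) : RootStep .wDown .ff P
  | wUp (P : F) : RootStep .wUp P .tt
  | cDown (P : F) : RootStep .cDown (.dis P P) P
  | cUp (P : F) : RootStep .cUp P (.con P P)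
  | s (P Q R : F) : RootStep .s (.con P (.dis Q R)) (.dis (.con P Q) R)
  | m (P Q R S : F) :
      RootStep .m (.dis (.con P Q) (.con R S)) (.con (.dis P R) (.dis Q S))
  | aiDown (A : F) (h : A.isAtom) : RootStep .aiDown .tt (.dis A A.negF)
  | aiUp (A : F) (h : A.isAtom) : RootStep .aiUp (.con A A.negF) .ff
  | awDown (A : F) (h : A.isAtom) : RootStep .awDown .ff A
  | awUp (A : F) (h : A.isAtom) : RootStep .awUp A .tt
  | acDown (A : F) (h : A.isAtom) : RootStep .acDown (.dis A A) A
  | acUp (A : F) (h : A.isAtom) : RootStep .acUp A (.con A A)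

/-- One inference step using a rule from the set `Rs`, applied inside an
arbitrary context and modulo the equivalence. -/
def Step (Rs : Set Rule) (P Q : F) : Prop :=
  ∃ r ∈ Rs, ∃ (C : Ctx) (P' Q' : F),
    RootStep r P' Q' ∧ Equiv P (C.fill P') ∧ Equiv (C.fill Q') Q

/-- Derivations over an arbitrary step relation: a finite sequence of rule
instances from the premise to the conclusion (modulo the equivalence). -/
inductive Deriv (St : F → F → Prop) : F → F → Prop where
  | eqv {P Q : F} : Equiv P Q → Deriv St P Q
  | step {P Q R : F} : St P Q → Deriv St Q R → Deriv St P R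

/-- The system SKSg: general (non-atomic) rules plus switch. -/
def SKSg : Set Rule := {.iDown, .iUp, .wDown, .wUp, .cDown, .cUp, .s}

/-- The system SKS: atomic rules plus switch and medial. -/
def SKS : Set Rule := {.aiDown, .aiUp, .awDown, .awUp, .acDown, .acUp, .s, .m}

/-- The system KS: the down fragment of SKS. -/
def KS : Set Rule := {.aiDown, .awDown, .acDown, .s, .m}

/-- A proof of `Q` in the system `Rs` is a derivation from the unit `t` to `Q`. -/
def Proof (Rs : Set Rule) (Q : F) : Prop := Deriv (Step Rs) .tt Q

/-- A rule `r` is derivable from a set `Rs` of rules if every instance of `r`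
(with premise `P` and conclusion `Q`) can be replaced by a derivation from
`P` to `Q` using only rules of `Rs`. -/
def RuleDerivable (r : Rule) (Rs : Set Rule) : Prop :=
  ∀ P Q : F, Step {r} P Q → Deriv (Step Rs) P Q

end DI

/-!
Placed inside the context `[¬P, { }]` below an instance of `i↓`, a derivation from `P` to `Q`
gives the proof `t ⟶ [P, ¬P] = [¬P, P] ⟶ [¬P, Q]`.  Conversely, a proof of `[¬P, Q]`, placed
inside `(P, { })`, is followed by one switch and one cut:
`P = (P, t) ⟶ (P, [¬P, Q]) ⟶ [(P, ¬P), Q] ⟶ [f, Q] = Q`.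
-/

namespace DI

section

variable {Rs : Set Rule} {r : Rule} {P Q R : F}

/-- Composition of contexts: `C.comp D` is `C{D{ }}`, the context obtained by plugging `D` into
the hole of `C`.  It turns a rule instance inside `D` into one inside `C{D{ }}`. -/
def Ctx.comp : Ctx → Ctx → Ctx
  | .hole, D => D
  | .disL C R, D => .disL (C.comp D) R
  | .disR R C, D => .disR R (C.comp D)
  | .conL C R, D => .conL (C.comp D) R
  | .conR R C, D => .conR R (C.comp D)

theorem Ctx.fill_comp (C D : Ctx) (P : F) : (C.comp D).fill P = C.fill (D.fill P) := by
  induction C <;> simp only [Ctx.comp, Ctx.fill, *]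

theorem Ctx.fill_congr (C : Ctx) (h : Equiv P Q) : Equiv (C.fill P) (C.fill Q) := by
  induction C with
  | hole => exact h
  | disL _ R ih => exact .disCongr ih (.refl R)
  | disR R _ ih => exact .disCongr (.refl R) ih
  | conL _ R ih => exact .conCongr ih (.refl R)
  | conR R _ ih => exact .conCongr (.refl R) ih

theorem RootStep.step (h : RootStep r P Q) (hr : r ∈ Rs) : Step Rs P Q :=
  ⟨r, hr, .hole, P, Q, h, .refl P, .refl Q⟩

theorem Step.of_equiv_left (e : Equiv P Q) (h : Step Rs Q R) : Step Rs P R := by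
  obtain ⟨r, hr, C, A, B, hAB, hQ, hR⟩ := h
  exact ⟨r, hr, C, A, B, hAB, e.trans hQ, hR⟩

theorem Step.fill (h : Step Rs P Q) (C : Ctx) : Step Rs (C.fill P) (C.fill Q) := by
  obtain ⟨r, hr, D, A, B, hAB, hP, hQ⟩ := h
  refine ⟨r, hr, C.comp D, A, B, hAB, ?_, ?_⟩
  · rw [Ctx.fill_comp]
    exact C.fill_congr hP
  · rw [Ctx.fill_comp]
    exact C.fill_congr hQ

theorem Step.deriv (h : Step Rs P Q) : Deriv (Step Rs) P Q :=
  .step h (.eqv (.refl Q))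

theorem Deriv.fill (h : Deriv (Step Rs) P Q) (C : Ctx) :
    Deriv (Step Rs) (C.fill P) (C.fill Q) := by
  induction h with
  | eqv e => exact .eqv (C.fill_congr e)
  | step s _ ih => exact .step (s.fill C) ih

theorem Deriv.of_equiv_left (e : Equiv P Q) (h : Deriv (Step Rs) Q R) :
    Deriv (Step Rs) P R := by
  cases h with
  | eqv e' => exact .eqv (e.trans e')
  | step s d => exact .step (s.of_equiv_left e) d

theorem Deriv.trans (hPQ : Deriv (Step Rs) P Q) (hQR : Deriv (Step Rs) Q R) :
    Deriv (Step Rs) P R := by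
  induction hPQ with
  | eqv e => exact hQR.of_equiv_left e
  | step s _ ih => exact .step s (ih hQR)

instance : Trans (Deriv (Step Rs)) (Deriv (Step Rs)) (Deriv (Step Rs)) where
  trans := Deriv.trans

theorem Deriv.proof_dis_negF (iDown_mem : .iDown ∈ Rs) (h : Deriv (Step Rs) P Q) :
    Proof Rs (.dis P.negF Q) :=
  calc
    Deriv (Step Rs) .tt (.dis P P.negF) := ((RootStep.iDown P).step iDown_mem).deriv
    Deriv (Step Rs) _ (.dis P.negF P) := .eqv (.disComm _ _)
    Deriv (Step Rs) _ (.dis P.negF Q) := h.fill (.disR P.negF .hole)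

theorem Proof.deriv_of_dis_negF (iUp_mem : .iUp ∈ Rs) (s_mem : .s ∈ Rs)
    (h : Proof Rs (.dis P.negF Q)) : Deriv (Step Rs) P Q :=
  calc
    Deriv (Step Rs) P (.con .tt P) := .eqv (Equiv.ttCon P).symm
    Deriv (Step Rs) _ (.con P .tt) := .eqv (.conComm _ _)
    Deriv (Step Rs) _ (.con P (.dis P.negF Q)) := Deriv.fill h (.conR P .hole)
    Deriv (Step Rs) _ (.dis (.con P P.negF) Q) := ((RootStep.s P P.negF Q).step s_mem).deriv
    Deriv (Step Rs) _ (.dis .ff Q) := (((RootStep.iUp P).step iUp_mem).fill (.disL .hole Q)).deriv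
    Deriv (Step Rs) _ Q := .eqv (.ffDis Q)

theorem deduction_SKSg_general (iDown_mem : .iDown ∈ Rs) (iUp_mem : .iUp ∈ Rs)
    (s_mem : .s ∈ Rs) (P Q : F) :
    Deriv (Step Rs) P Q ↔ Proof Rs (.dis P.negF Q) :=
  ⟨Deriv.proof_dis_negF iDown_mem, Proof.deriv_of_dis_negF iUp_mem s_mem⟩

end

/-- Deduction theorem for SKSg.
For all formulas `P` and `Q`, there is a derivation in SKSg with premise `P`
and conclusion `Q` if and only if there is a proof in SKSg of `[¬P, Q]`. -/
theorem deduction_SKSg (P Q : F) :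
    Deriv (Step SKSg) P Q ↔ Proof SKSg (.dis P.negF Q) :=
  deduction_SKSg_general (by simp [SKSg]) (by simp [SKSg]) (by simp [SKSg]) P Q

end DI
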